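/- Let λ ∈ ℂ with λ₁ := Re λ > 0, let n₀ ≥ 2 be an integer, and let w ∈ ℂ satisfy |Re w| ≤ (n₀/2)·λ₁. Then the series ∑_{n ≥ n₀} 1/(|w − n·λ|·|w + n·λ|) converges and is bounded above by (2/λ₁)². -/

import Mathlib

/-!
Bounding each norm below by the absolute value of the real part gives
`‖w - z‖ * ‖w + z‖ ≥ (Re z) ^ 2 - (Re w) ^ 2`. For `z = m λ` with `m ≥ n₀` the hypothesis on `w`
makes the right-hand side at least `3/4 * (m λ₁) ^ 2 ≥ m * (m + 1) * (λ₁ / 2) ^ 2`, so the series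
is dominated by `(2 / λ₁) ^ 2 * ∑ 1 / (m * (m + 1))`, which telescopes to `(2 / λ₁) ^ 2 / n₀`.
-/

open Complex

open Filter Topology

theorem hasSum_sub_succ_of_antitone {f : ℕ → ℝ} {l : ℝ} (hf : Antitone f)
    (hl : Tendsto f atTop (𝓝 l)) : HasSum (fun n ↦ f n - f (n + 1)) (f 0 - l) := by
  rw [hasSum_iff_tendsto_nat_of_nonneg fun n ↦ sub_nonneg.2 (hf n.le_succ)]
  simpa only [Finset.sum_range_sub'] using hl.const_sub (f 0)

theorem hasSum_one_div_add_mul_add_add_one {a : ℝ} (ha : 0 < a) :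
    HasSum (fun n : ℕ ↦ 1 / ((n + a) * (n + a + 1))) (1 / a) := by
  have hanti : Antitone fun n : ℕ ↦ 1 / (n + a) := fun m n hmn ↦ by
    dsimp only
    gcongr
  have hlim : Tendsto (fun n : ℕ ↦ 1 / (n + a)) atTop (𝓝 0) :=
    (tendsto_atTop_add_const_right _ a tendsto_natCast_atTop_atTop).const_div_atTop 1
  convert hasSum_sub_succ_of_antitone hanti hlim using 1
  · ext n
    push_cast
    field_simp
    ring
  · simp only [Nat.cast_zero, zero_add, sub_zero]

theorem sq_re_sub_sq_re_le_norm_sub_mul_norm_add (z w : ℂ) :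
    z.re ^ 2 - w.re ^ 2 ≤ ‖w - z‖ * ‖w + z‖ :=
  calc
    z.re ^ 2 - w.re ^ 2 = -((w - z).re * (w + z).re) := by
      rw [sub_re, add_re]
      ring
    _ ≤ |(w - z).re| * |(w + z).re| := by
      rw [← abs_mul]
      exact neg_le_abs _
    _ ≤ ‖w - z‖ * ‖w + z‖ := by
      gcongr <;> exact abs_re_le_norm _

theorem three_div_four_mul_sq_re_le_norm_sub_mul_norm_add {z w : ℂ}
    (h : |w.re| ≤ |z.re| / 2) : 3 / 4 * z.re ^ 2 ≤ ‖w - z‖ * ‖w + z‖ := by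
  have hsq : w.re ^ 2 ≤ (z.re / 2) ^ 2 :=
    sq_le_sq.2 (by rwa [abs_div, abs_two])
  linarith [sq_re_sub_sq_re_le_norm_sub_mul_norm_add z w]

theorem one_div_norm_sub_mul_norm_add_natCast_mul_le {lam w : ℂ} (hlam : 0 < lam.re) {m : ℕ}
    (hm : 0 < m) (hw : |w.re| ≤ (m : ℝ) / 2 * lam.re) :
    1 / (‖w - (m : ℂ) * lam‖ * ‖w + (m : ℂ) * lam‖) ≤
      (2 / lam.re) ^ 2 * (1 / ((m : ℝ) * (m + 1))) := by
  have hm_one : (1 : ℝ) ≤ m := by exact_mod_cast hm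
  have hre : ((m : ℂ) * lam).re = m * lam.re := by
    rw [← nsmul_eq_mul, re_nsmul, nsmul_eq_mul]
  have hhalf : |w.re| ≤ |((m : ℂ) * lam).re| / 2 := by
    have hpos : 0 < m * lam.re := by positivity
    rw [hre, abs_of_pos hpos]
    linarith
  have hlower : m * (m + 1) * (lam.re / 2) ^ 2 ≤ ‖w - (m : ℂ) * lam‖ * ‖w + (m : ℂ) * lam‖ :=
    calc
      m * (m + 1) * (lam.re / 2) ^ 2 ≤ m * (3 * m) * (lam.re / 2) ^ 2 := by
        gcongr
        linarith
      _ = 3 / 4 * ((m : ℂ) * lam).re ^ 2 := by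
        rw [hre]
        ring
      _ ≤ ‖w - (m : ℂ) * lam‖ * ‖w + (m : ℂ) * lam‖ :=
        three_div_four_mul_sq_re_le_norm_sub_mul_norm_add hhalf
  calc
    1 / (‖w - (m : ℂ) * lam‖ * ‖w + (m : ℂ) * lam‖) ≤ 1 / (m * (m + 1) * (lam.re / 2) ^ 2) :=
      one_div_le_one_div_of_le (by positivity) hlower
    _ = (2 / lam.re) ^ 2 * (1 / ((m : ℝ) * (m + 1))) := by
      field_simp

theorem statement19_general (lam : ℂ) (hlam : 0 < lam.re) (n₀ : ℕ) (hn₀ : 0 < n₀)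
    (w : ℂ) (hw : |w.re| ≤ ((n₀ : ℝ) / 2) * lam.re) :
    Summable (fun n : ℕ =>
      1 / (‖w - ((n + n₀ : ℕ) : ℂ) * lam‖ *
        ‖w + ((n + n₀ : ℕ) : ℂ) * lam‖)) ∧
    (∑' n : ℕ,
      1 / (‖w - ((n + n₀ : ℕ) : ℂ) * lam‖ *
        ‖w + ((n + n₀ : ℕ) : ℂ) * lam‖)) ≤ (2 / lam.re) ^ 2 / n₀ := by
  have hmajorant : HasSum (fun n : ℕ ↦ (2 / lam.re) ^ 2 *
      (1 / (((n + n₀ : ℕ) : ℝ) * ((n + n₀ : ℕ) + 1)))) ((2 / lam.re) ^ 2 / n₀) := by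
    simpa only [Nat.cast_add, mul_one_div] using
      (hasSum_one_div_add_mul_add_add_one (Nat.cast_pos.2 hn₀)).mul_left ((2 / lam.re) ^ 2)
  have hterm (n : ℕ) := one_div_norm_sub_mul_norm_add_natCast_mul_le hlam
    (Nat.add_pos_right n hn₀) (hw.trans (by gcongr; exact Nat.le_add_left n₀ n))
  have hsum := Summable.of_nonneg_of_le (fun n ↦ by positivity) hterm hmajorant.summable
  exact ⟨hsum, hasSum_le hterm hsum.hasSum hmajorant⟩

/-- the key summation estimate: if `λ₁ = Re λ > 0`, `n₀ ≥ 2` and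
`|Re w| ≤ (n₀/2)·λ₁`, then `∑_{n ≥ n₀} 1/(|w − nλ|·|w + nλ|)` converges and is at most
`(2/λ₁)²`. -/
theorem statement19 (lam : ℂ) (hlam : 0 < lam.re) (n₀ : ℕ) (hn₀ : 2 ≤ n₀)
    (w : ℂ) (hw : |w.re| ≤ ((n₀ : ℝ) / 2) * lam.re) :
    Summable (fun n : ℕ =>
      1 / (‖w - ((n + n₀ : ℕ) : ℂ) * lam‖ *
        ‖w + ((n + n₀ : ℕ) : ℂ) * lam‖)) ∧
    (∑' n : ℕ,
      1 / (‖w - ((n + n₀ : ℕ) : ℂ) * lam‖ *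
        ‖w + ((n + n₀ : ℕ) : ℂ) * lam‖)) ≤ (2 / lam.re) ^ 2 := by
  obtain ⟨hsum, hle⟩ := statement19_general lam hlam n₀ (by lia) w hw
  exact ⟨hsum, hle.trans <| div_le_self (sq_nonneg _) (by exact_mod_cast (by lia : 1 ≤ n₀))⟩
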